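/- Let Â = â⊗b̂⊗ĉ with ‖â‖ = ‖b̂‖ = 1, and let Z and the assumptions (i) rank Z = n1+n2 and (ii) the four pairs (±â, ±b̂) are the only unit-norm common zeros of all the forms Â_{i_s j_s k} a_{i_t} b_{j_t} − Â_{i_t j_t k} a_{i_s} b_{j_s} be as in Theorem 3.1. Assume additionally that (â,b̂) is nonsingular, i.e., for every k ∈ [n3], m_k ≥ 1 and â_{i_s} b̂_{j_s} ≠ 0 for at least one s ∈ [m_k], and that ĉ_k ≠ 0 for every k ∈ [n3]. Then there exist constants C > 0 and ε > 0 such that for every tensor A ∈ ℝ^{n1×n2×n3} with ‖A − Â‖_Ω ≤ ε and every global minimizer (a*, b*) of f_A over {(a,b) : ‖a‖ = ‖b‖ = 1}: the pair (a*, b*) is nonsingular, and the vector c* ∈ ℝ^{n3} defined coordinatewise by c*_k = (Σ_{s=1}^{m_k} A_{i_s j_s k} a*_{i_s} b*_{j_s}) / (Σ_{s=1}^{m_k} (a*_{i_s} b*_{j_s})²) satisfies ‖a*⊗b*⊗c* − â⊗b̂⊗ĉ‖ ≤ C·‖A − Â‖_Ω. -/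

import Mathlib

open Finset Matrix

noncomputable section

/-- The biquadratic objective `f_A(a,b)` of the rank-1 completion problem. -/
def fA {n1 n2 n3 : ℕ} (m : Fin n3 → ℕ)
    (I : (k : Fin n3) → Fin (m k) → Fin n1) (J : (k : Fin n3) → Fin (m k) → Fin n2)
    (A : Fin n1 → Fin n2 → Fin n3 → ℝ) (a : Fin n1 → ℝ) (b : Fin n2 → ℝ) : ℝ :=
  ∑ k : Fin n3, ∑ s : Fin (m k), ∑ t : Fin (m k),
    if s < t then
      (A (I k s) (J k s) k * a (I k t) * b (J k t)
        - A (I k t) (J k t) k * a (I k s) * b (J k s)) ^ 2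
    else 0

/-- `‖D‖_Ω`, the norm over the observed index set `Ω` (given by its slice enumerations). -/
def normOmega {n1 n2 n3 : ℕ} (m : Fin n3 → ℕ)
    (I : (k : Fin n3) → Fin (m k) → Fin n1) (J : (k : Fin n3) → Fin (m k) → Fin n2)
    (D : Fin n1 → Fin n2 → Fin n3 → ℝ) : ℝ :=
  Real.sqrt (∑ k : Fin n3, ∑ s : Fin (m k), (D (I k s) (J k s) k) ^ 2)

/-- A pair `(a,b)` is nonsingular: every slice has an observed entry with `a_i b_j ≠ 0`. -/
def Nonsingular {n1 n2 n3 : ℕ} (m : Fin n3 → ℕ)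
    (I : (k : Fin n3) → Fin (m k) → Fin n1) (J : (k : Fin n3) → Fin (m k) → Fin n2)
    (a : Fin n1 → ℝ) (b : Fin n2 → ℝ) : Prop :=
  ∀ k : Fin n3, 0 < m k ∧ ∃ s : Fin (m k), a (I k s) * b (J k s) ≠ 0

lemma res_le_fA {n1 n2 n3 : ℕ} (m : Fin n3 → ℕ)
    (I : (k : Fin n3) → Fin (m k) → Fin n1) (J : (k : Fin n3) → Fin (m k) → Fin n2)
    (A : Fin n1 → Fin n2 → Fin n3 → ℝ) (a : Fin n1 → ℝ) (b : Fin n2 → ℝ)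
    (k : Fin n3) (s t : Fin (m k)) (hst : s < t) :
    |A (I k s) (J k s) k * a (I k t) * b (J k t)
        - A (I k t) (J k t) k * a (I k s) * b (J k s)| ≤ Real.sqrt (fA m I J A a b) := by
  apply Real.abs_le_sqrt
  unfold fA
  have h0 : ∀ (k : Fin n3) (s t : Fin (m k)), 0 ≤ (if s < t then
      (A (I k s) (J k s) k * a (I k t) * b (J k t)
        - A (I k t) (J k t) k * a (I k s) * b (J k s)) ^ 2
    else 0) := by
    intro k s t; split_ifs <;> positivity
  refine le_trans ?_ (Finset.single_le_sum (f := fun k : Fin n3 => ∑ s : Fin (m k), ∑ t : Fin (m k), _) (fun k _ => Finset.sum_nonneg fun s _ => Finset.sum_nonneg fun t _ => h0 k s t) (Finset.mem_univ k))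
  refine le_trans ?_ (Finset.single_le_sum (f := fun s : Fin (m k) => ∑ t : Fin (m k), _) (fun s _ => Finset.sum_nonneg fun t _ => h0 k s t) (Finset.mem_univ s))
  refine le_trans ?_ (Finset.single_le_sum (f := fun t : Fin (m k) => _) (fun t _ => h0 k s t) (Finset.mem_univ t))
  simp [hst]

lemma fA_nonneg {n1 n2 n3 : ℕ} (m : Fin n3 → ℕ)
    (I : (k : Fin n3) → Fin (m k) → Fin n1) (J : (k : Fin n3) → Fin (m k) → Fin n2)
    (A : Fin n1 → Fin n2 → Fin n3 → ℝ) (a : Fin n1 → ℝ) (b : Fin n2 → ℝ) :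
    0 ≤ fA m I J A a b := by
  unfold fA
  refine Finset.sum_nonneg fun k _ => Finset.sum_nonneg fun s _ => Finset.sum_nonneg fun t _ => ?_
  split_ifs <;> positivity

lemma fA_sign {n1 n2 n3 : ℕ} (m : Fin n3 → ℕ)
    (I : (k : Fin n3) → Fin (m k) → Fin n1) (J : (k : Fin n3) → Fin (m k) → Fin n2)
    (A : Fin n1 → Fin n2 → Fin n3 → ℝ) (a : Fin n1 → ℝ) (b : Fin n2 → ℝ) (σ τ : ℝ)
    (hσ : σ ^ 2 = 1) (hτ : τ ^ 2 = 1) :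
    fA m I J A (fun i => σ * a i) (fun j => τ * b j) = fA m I J A a b := by
  unfold fA
  refine Finset.sum_congr rfl fun k _ => Finset.sum_congr rfl fun s _ =>
    Finset.sum_congr rfl fun t _ => ?_
  split_ifs
  · calc _ = σ ^ 2 * τ ^ 2 * (A (I k s) (J k s) k * a (I k t) * b (J k t)
        - A (I k t) (J k t) k * a (I k s) * b (J k s)) ^ 2 := by ring
      _ = _ := by rw [hσ, hτ]; ring
  · rfl

lemma fA_split {n1 n2 n3 : ℕ} (m : Fin n3 → ℕ)
    (I : (k : Fin n3) → Fin (m k) → Fin n1) (J : (k : Fin n3) → Fin (m k) → Fin n2)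
    (A B : Fin n1 → Fin n2 → Fin n3 → ℝ) (a : Fin n1 → ℝ) (b : Fin n2 → ℝ) :
    fA m I J B a b ≤ 2 * fA m I J A a b + 2 * fA m I J (A - B) a b := by
  unfold fA
  simp only [Finset.mul_sum, ← Finset.sum_add_distrib]
  refine Finset.sum_le_sum fun k _ => Finset.sum_le_sum fun s _ =>
    Finset.sum_le_sum fun t _ => ?_
  split_ifs
  · simp only [Pi.sub_apply]
    set x := A (I k s) (J k s) k * a (I k t) * b (J k t)
        - A (I k t) (J k t) k * a (I k s) * b (J k s) with hx
    set y := B (I k s) (J k s) k * a (I k t) * b (J k t)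
        - B (I k t) (J k t) k * a (I k s) * b (J k s) with hy
    have : (A (I k s) (J k s) k - B (I k s) (J k s) k) * a (I k t) * b (J k t)
        - (A (I k t) (J k t) k - B (I k t) (J k t) k) * a (I k s) * b (J k s) = x - y := by
      rw [hx, hy]; ring
    rw [this]
    nlinarith [sq_nonneg (2 * x - y)]
  · simp

lemma fA_hat {n1 n2 n3 : ℕ} (m : Fin n3 → ℕ)
    (I : (k : Fin n3) → Fin (m k) → Fin n1) (J : (k : Fin n3) → Fin (m k) → Fin n2)
    (A B : Fin n1 → Fin n2 → Fin n3 → ℝ) (a : Fin n1 → ℝ) (b : Fin n2 → ℝ) (c : Fin n3 → ℝ)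
    (hB : ∀ i j k, B i j k = a i * b j * c k) :
    fA m I J A a b = fA m I J (A - B) a b := by
  unfold fA
  refine Finset.sum_congr rfl fun k _ => Finset.sum_congr rfl fun s _ =>
    Finset.sum_congr rfl fun t _ => ?_
  split_ifs
  · simp only [Pi.sub_apply, hB]
    ring
  · rfl

lemma entry_le {n1 n2 n3 : ℕ} (m : Fin n3 → ℕ)
    (I : (k : Fin n3) → Fin (m k) → Fin n1) (J : (k : Fin n3) → Fin (m k) → Fin n2)
    (D : Fin n1 → Fin n2 → Fin n3 → ℝ) (k : Fin n3) (s : Fin (m k)) :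
    |D (I k s) (J k s) k| ≤ normOmega m I J D := by
  apply Real.abs_le_sqrt
  refine le_trans ?_ (Finset.single_le_sum (f := fun k : Fin n3 => ∑ s : Fin (m k), _) (fun k _ => Finset.sum_nonneg fun s _ => sq_nonneg _) (Finset.mem_univ k))
  exact (Finset.single_le_sum (f := fun s : Fin (m k) => (D (I k s) (J k s) k) ^ 2) (fun s _ => sq_nonneg _) (Finset.mem_univ s))

lemma fA_bound {n1 n2 n3 : ℕ} (m : Fin n3 → ℕ)
    (I : (k : Fin n3) → Fin (m k) → Fin n1) (J : (k : Fin n3) → Fin (m k) → Fin n2)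
    (D : Fin n1 → Fin n2 → Fin n3 → ℝ) (a : Fin n1 → ℝ) (b : Fin n2 → ℝ)
    (ha : ∀ i, |a i| ≤ 1) (hb : ∀ j, |b j| ≤ 1) :
    fA m I J D a b ≤ (∑ k, (m k : ℝ) * m k) * (4 * normOmega m I J D ^ 2) := by
  have h0 : 0 ≤ normOmega m I J D := Real.sqrt_nonneg _
  unfold fA
  rw [Finset.sum_mul]
  refine Finset.sum_le_sum fun k _ => ?_
  calc _ ≤ ∑ s : Fin (m k), ∑ t : Fin (m k), (4 * normOmega m I J D ^ 2) := ?_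
    _ = _ := by simp; ring
  refine Finset.sum_le_sum fun s _ => Finset.sum_le_sum fun t _ => ?_
  split_ifs
  · have key : ∀ s t : Fin (m k), |D (I k s) (J k s) k * a (I k t) * b (J k t)|
        ≤ normOmega m I J D := by
      intro s t
      rw [abs_mul, abs_mul]
      have h1 := entry_le m I J D k s
      calc _ ≤ normOmega m I J D * 1 * 1 := by
            gcongr
            · exact ha _
            · exact hb _
        _ = _ := by ring
    have h1 := abs_sub _ _ |>.trans (add_le_add (key s t) (key t s))
    have := sq_le_sq' (abs_le.1 h1).1 (abs_le.1 h1).2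
    linarith
  · positivity

lemma coord_le {n : ℕ} (a : EuclideanSpace ℝ (Fin n)) (i : Fin n) : |a i| ≤ ‖a‖ := by
  simpa using PiLp.norm_apply_le a i

/-- quadratic row estimate -/
lemma row_unit {n : ℕ} (a h : EuclideanSpace ℝ (Fin n)) (r : ℝ) (ha : ‖a‖ = 1) (hh : ‖h‖ = 1)
    (hr : ∀ i, |h i - a i| ≤ r) :
    |∑ i, a i * (h i - a i)| ≤ n * r ^ 2 := by
  have e1 : ∑ i, a i ^ 2 = 1 := by
    have := EuclideanSpace.real_norm_sq_eq a
    rw [ha] at this; linarith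
  have e2 : ∑ i, h i ^ 2 = 1 := by
    have := EuclideanSpace.real_norm_sq_eq h
    rw [hh] at this; linarith
  have e3 : ∑ i, a i * (h i - a i) = - (1 / 2) * ∑ i, (h i - a i) ^ 2 := by
    have : ∑ i, (2 * (a i * (h i - a i)) + (h i - a i) ^ 2 + a i ^ 2 - h i ^ 2) = 0 :=
      Finset.sum_eq_zero fun i _ => by ring
    rw [Finset.sum_sub_distrib, Finset.sum_add_distrib, Finset.sum_add_distrib, ← Finset.mul_sum] at this
    linarith
  have h4 : ∑ i, (h i - a i) ^ 2 ≤ n * r ^ 2 := by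
    calc _ ≤ ∑ i : Fin n, r ^ 2 := Finset.sum_le_sum fun i _ =>
            sq_le_sq' (abs_le.1 (hr i)).1 (abs_le.1 (hr i)).2
      _ = _ := by simp
  have h5 : 0 ≤ ∑ i, (h i - a i) ^ 2 := Finset.sum_nonneg fun i _ => sq_nonneg _
  rw [e3, abs_le]
  constructor <;> linarith

lemma antilip {ι κ : Type*} [Fintype ι] [Fintype κ] [DecidableEq κ] (Z : Matrix ι κ ℝ)
    (h : Z.rank = Fintype.card κ) :
    ∃ K : ℝ, 0 < K ∧ ∀ v : κ → ℝ, ‖v‖ ≤ K * ‖Z *ᵥ v‖ := by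
  have hker : LinearMap.ker Z.mulVecLin = ⊥ := by
    have h1 := LinearMap.finrank_range_add_finrank_ker Z.mulVecLin
    have h2 : Module.finrank ℝ (LinearMap.range Z.mulVecLin) = Fintype.card κ := h
    rw [h2, Module.finrank_fintype_fun_eq_card] at h1
    exact Submodule.finrank_eq_zero.1 (by omega)
  obtain ⟨K, hK0, hK⟩ := LinearMap.exists_antilipschitzWith Z.mulVecLin hker
  refine ⟨K, by exact_mod_cast hK0, fun v => ?_⟩
  have := hK.le_mul_dist v 0
  simpa using this

lemma quad_bound (c p q u v w x r g S : ℝ) (M : ℝ) (hc : |c| ≤ M) (hp : |p| ≤ 1) (hq : |q| ≤ 1)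
    (hu : |u| ≤ r) (hv : |v| ≤ r) (hw : |w| ≤ r) (hx : |x| ≤ r) (hg : |g| ≤ S)
    {L : ℝ} (hL : L = Real.sqrt 2 * (g - c * (p * (u * v) - q * (w * x)))) :
    |L| ≤ 2 * S + 4 * M * r ^ 2 := by
  have hr : 0 ≤ r := (abs_nonneg _).trans hu
  have hM : 0 ≤ M := (abs_nonneg _).trans hc
  have hS : 0 ≤ S := (abs_nonneg _).trans hg
  have h2 : Real.sqrt 2 ≤ 2 := by
    rw [Real.sqrt_le_left (by norm_num)]; norm_num
  have k1 : |p * (u * v)| ≤ r ^ 2 := by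
    rw [abs_mul, abs_mul]
    calc _ ≤ 1 * (r * r) := by gcongr
      _ = _ := by ring
  have k2 : |q * (w * x)| ≤ r ^ 2 := by
    rw [abs_mul, abs_mul]
    calc _ ≤ 1 * (r * r) := by gcongr
      _ = _ := by ring
  have k3 : |c * (p * (u * v) - q * (w * x))| ≤ M * (r ^ 2 + r ^ 2) := by
    rw [abs_mul]
    exact mul_le_mul hc ((abs_sub _ _).trans (add_le_add k1 k2)) (abs_nonneg _) hM
  rw [hL, abs_mul, abs_of_nonneg (Real.sqrt_nonneg 2)]
  calc _ ≤ 2 * (S + M * (r ^ 2 + r ^ 2)) :=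
        mul_le_mul h2 ((abs_sub _ _).trans (add_le_add hg k3)) (abs_nonneg _) (by norm_num)
    _ = _ := by ring

lemma local_bound {n1 n2 n3 : ℕ}
    (m : Fin n3 → ℕ)
    (I : (k : Fin n3) → Fin (m k) → Fin n1) (J : (k : Fin n3) → Fin (m k) → Fin n2)
    (ahat : EuclideanSpace ℝ (Fin n1)) (bhat : EuclideanSpace ℝ (Fin n2))
    (chat : Fin n3 → ℝ)
    (hna : ‖ahat‖ = 1) (hnb : ‖bhat‖ = 1)
    (Ahat : Fin n1 → Fin n2 → Fin n3 → ℝ)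
    (hAhat : ∀ i j k, Ahat i j k = ahat i * bhat j * chat k)
    (Z : Matrix ((Σ k : Fin n3, {p : Fin (m k) × Fin (m k) // p.1 < p.2}) ⊕ Fin 2)
          (Fin n1 ⊕ Fin n2) ℝ)
    (hZ : Z = Matrix.of (Sum.elim
      (fun q : Σ k : Fin n3, {p : Fin (m k) × Fin (m k) // p.1 < p.2} =>
        fun x : Fin n1 ⊕ Fin n2 => Real.sqrt 2 * chat q.1 *
          (Sum.elim
            (fun i => ahat (I q.1 q.2.1.1) * bhat (J q.1 q.2.1.1) * bhat (J q.1 q.2.1.2) *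
                  (if i = I q.1 q.2.1.2 then 1 else 0)
              - ahat (I q.1 q.2.1.2) * bhat (J q.1 q.2.1.2) * bhat (J q.1 q.2.1.1) *
                  (if i = I q.1 q.2.1.1 then 1 else 0))
            (fun j => ahat (I q.1 q.2.1.1) * bhat (J q.1 q.2.1.1) * ahat (I q.1 q.2.1.2) *
                  (if j = J q.1 q.2.1.2 then 1 else 0)
              - ahat (I q.1 q.2.1.2) * bhat (J q.1 q.2.1.2) * ahat (I q.1 q.2.1.1) *
                  (if j = J q.1 q.2.1.1 then 1 else 0)) x))
      ![Sum.elim (fun i => ahat i) (fun _ => 0),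
        Sum.elim (fun _ => 0) (fun j => bhat j)]))
    (hrank : Z.rank = n1 + n2) :
    ∃ K : ℝ, 0 < K ∧ ∃ r : ℝ, 0 < r ∧
      ∀ (a : EuclideanSpace ℝ (Fin n1)) (b : EuclideanSpace ℝ (Fin n2)),
        ‖a‖ = 1 → ‖b‖ = 1 → (∀ i, |a i - ahat i| ≤ r) → (∀ j, |b j - bhat j| ≤ r) →
        (∀ i, |a i - ahat i| ≤ K * Real.sqrt (fA m I J Ahat (fun i => a i) (fun j => b j))) ∧
        (∀ j, |b j - bhat j| ≤ K * Real.sqrt (fA m I J Ahat (fun i => a i) (fun j => b j))) := by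
  obtain ⟨K, hK, hKZ⟩ := antilip Z (by simpa using hrank)
  set M : ℝ := 4 * ‖chat‖ + n1 + n2 with hM
  have hM0 : 0 ≤ M := by positivity
  refine ⟨4 * K, by positivity, 1 / (2 * (K * M + 1)), by positivity, ?_⟩
  intro a b ha hb har hbr
  set S := Real.sqrt (fA m I J Ahat (fun i => a i) (fun j => b j)) with hS
  have hS0 : 0 ≤ S := Real.sqrt_nonneg _
  set v : Fin n1 ⊕ Fin n2 → ℝ := Sum.elim (fun i => a i - ahat i) (fun j => b j - bhat j) with hv
  have hva : ∀ i, |a i - ahat i| ≤ ‖v‖ := fun i => by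
    simpa [hv] using norm_le_pi_norm v (Sum.inl i)
  have hvb : ∀ j, |b j - bhat j| ≤ ‖v‖ := fun j => by
    simpa [hv] using norm_le_pi_norm v (Sum.inr j)
  have hvr : ‖v‖ ≤ 1 / (2 * (K * M + 1)) := by
    rw [pi_norm_le_iff_of_nonneg (by positivity)]
    rintro (i | j)
    · simpa [hv] using har i
    · simpa [hv] using hbr j
  have hrow : ‖Z *ᵥ v‖ ≤ 2 * S + M * ‖v‖ ^ 2 := by
    rw [pi_norm_le_iff_of_nonneg (by positivity)]
    have hc0 : 0 ≤ ‖chat‖ := norm_nonneg _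
    have hv2 : 0 ≤ ‖v‖ ^ 2 := by positivity
    have hn1' : (0 : ℝ) ≤ n1 * ‖v‖ ^ 2 := by positivity
    have hn2' : (0 : ℝ) ≤ n2 * ‖v‖ ^ 2 := by positivity
    have hc' : (0 : ℝ) ≤ ‖chat‖ * ‖v‖ ^ 2 := by positivity
    rintro (⟨k, ⟨⟨s, t⟩, hst⟩⟩ | l)
    · have hprod : ∀ (s : Fin (m k)), |ahat (I k s) * bhat (J k s)| ≤ 1 := by
        intro s
        rw [abs_mul]
        have h1 := coord_le ahat (I k s)
        have h2 := coord_le bhat (J k s)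
        rw [hna] at h1; rw [hnb] at h2
        exact mul_le_one₀ h1 (abs_nonneg _) h2
      have hg := res_le_fA m I J Ahat (fun i => a i) (fun j => b j) k s t hst
      have := quad_bound (chat k) (ahat (I k s) * bhat (J k s)) (ahat (I k t) * bhat (J k t))
        _ _ _ _ ‖v‖ _ S ‖chat‖ (by simpa using norm_le_pi_norm chat k) (hprod s) (hprod t)
        (hva (I k t)) (hvb (J k t)) (hva (I k s)) (hvb (J k s)) hg
        (L := (Z *ᵥ v) (Sum.inl ⟨k, ⟨⟨s, t⟩, hst⟩⟩)) ?_
      · rw [Real.norm_eq_abs]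
        refine this.trans ?_
        rw [hM]; nlinarith
      · rw [hZ]
        simp only [Matrix.mulVec, dotProduct, Matrix.of_apply, Sum.elim_inl, Fintype.sum_sum_type,
          hv, Sum.elim_inr]
        simp only [mul_assoc, ← Finset.mul_sum, sub_mul, Finset.sum_sub_distrib, ite_mul, one_mul,
          zero_mul, Finset.sum_ite_eq', Finset.mem_univ, if_true]
        simp only [hAhat]
        ring
    · rw [Real.norm_eq_abs]
      fin_cases l
      · have := row_unit ahat a ‖v‖ hna ha hva
        have e : (Z *ᵥ v) (Sum.inr 0) = ∑ i, ahat i * (a i - ahat i) := by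
          rw [hZ]
          simp [Matrix.mulVec, dotProduct, hv]
        change |(Z *ᵥ v) (Sum.inr 0)| ≤ _
        rw [e, hM]; nlinarith
      · have := row_unit bhat b ‖v‖ hnb hb hvb
        have e : (Z *ᵥ v) (Sum.inr 1) = ∑ i, bhat i * (b i - bhat i) := by
          rw [hZ]
          simp [Matrix.mulVec, dotProduct, hv]
        change |(Z *ᵥ v) (Sum.inr 1)| ≤ _
        rw [e, hM]; nlinarith
  have hfin : ‖v‖ ≤ 4 * K * S := by
    have h1 := hKZ v
    have h2 : ‖v‖ ≤ K * (2 * S + M * ‖v‖ ^ 2) := h1.trans (by gcongr)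
    have h3 : (K * M) * ‖v‖ ≤ 1 / 2 := by
      calc (K * M) * ‖v‖ ≤ (K * M + 1) * (1 / (2 * (K * M + 1))) := by
            gcongr; linarith
        _ = 1 / 2 := by field_simp
    nlinarith [norm_nonneg v]
  exact ⟨fun i => (hva i).trans hfin, fun j => (hvb j).trans hfin⟩

set_option maxHeartbeats 1000000 in
lemma global_bound {n1 n2 n3 : ℕ}
    (m : Fin n3 → ℕ)
    (I : (k : Fin n3) → Fin (m k) → Fin n1) (J : (k : Fin n3) → Fin (m k) → Fin n2)
    (ahat : EuclideanSpace ℝ (Fin n1)) (bhat : EuclideanSpace ℝ (Fin n2))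
    (hna : ‖ahat‖ = 1) (hnb : ‖bhat‖ = 1)
    (Ahat : Fin n1 → Fin n2 → Fin n3 → ℝ)
    (hzeros : ∀ (a : EuclideanSpace ℝ (Fin n1)) (b : EuclideanSpace ℝ (Fin n2)),
      ‖a‖ = 1 → ‖b‖ = 1 →
      (∀ (k : Fin n3) (s t : Fin (m k)), s < t →
        Ahat (I k s) (J k s) k * a (I k t) * b (J k t)
          - Ahat (I k t) (J k t) k * a (I k s) * b (J k s) = 0) →
      ((a = ahat ∧ b = bhat) ∨ (a = ahat ∧ b = -bhat) ∨
       (a = -ahat ∧ b = bhat) ∨ (a = -ahat ∧ b = -bhat)))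
    (hloc : ∃ K : ℝ, 0 < K ∧ ∃ r : ℝ, 0 < r ∧
      ∀ (a : EuclideanSpace ℝ (Fin n1)) (b : EuclideanSpace ℝ (Fin n2)),
        ‖a‖ = 1 → ‖b‖ = 1 → (∀ i, |a i - ahat i| ≤ r) → (∀ j, |b j - bhat j| ≤ r) →
        (∀ i, |a i - ahat i| ≤ K * Real.sqrt (fA m I J Ahat (fun i => a i) (fun j => b j))) ∧
        (∀ j, |b j - bhat j| ≤ K * Real.sqrt (fA m I J Ahat (fun i => a i) (fun j => b j)))) :
    ∃ K : ℝ, 0 < K ∧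
      ∀ (a : EuclideanSpace ℝ (Fin n1)) (b : EuclideanSpace ℝ (Fin n2)),
        ‖a‖ = 1 → ‖b‖ = 1 → ∃ σ τ : ℝ, σ ^ 2 = 1 ∧ τ ^ 2 = 1 ∧
        (∀ i, |σ * a i - ahat i| ≤ K * Real.sqrt (fA m I J Ahat (fun i => a i) (fun j => b j))) ∧
        (∀ j, |τ * b j - bhat j| ≤ K * Real.sqrt (fA m I J Ahat (fun i => a i) (fun j => b j))) := by
  obtain ⟨K, hK, r, hr, hloc⟩ := hloc
  let F : EuclideanSpace ℝ (Fin n1) × EuclideanSpace ℝ (Fin n2) → ℝ := fun x =>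
    Real.sqrt (fA m I J Ahat (fun i => x.1 i) (fun j => x.2 j))
  have hF : Continuous F := by
    refine Real.continuous_sqrt.comp ?_
    unfold fA
    refine continuous_finsetSum _ fun k _ => continuous_finsetSum _ fun s _ =>
      continuous_finsetSum _ fun t _ => ?_
    split_ifs
    · fun_prop
    · exact continuous_const
  let T : Set (EuclideanSpace ℝ (Fin n1) × EuclideanSpace ℝ (Fin n2)) :=
    (Metric.sphere 0 1 ×ˢ Metric.sphere 0 1) ∩
      {x | ∀ σ τ : ℝ, σ ^ 2 = 1 → τ ^ 2 = 1 → r ≤ max ‖σ • x.1 - ahat‖ ‖τ • x.2 - bhat‖}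
  have hT : IsCompact T := by
    refine ((isCompact_sphere 0 1).prod (isCompact_sphere 0 1)).inter_right ?_
    simp only [Set.ofPred_forall]
    refine isClosed_iInter fun σ => isClosed_iInter fun τ => isClosed_iInter fun _ =>
      isClosed_iInter fun _ => isClosed_le continuous_const ?_
    fun_prop
  have hpos : ∃ μ : ℝ, 0 < μ ∧ ∀ x ∈ T, μ ≤ F x := by
    rcases T.eq_empty_or_nonempty with h | h
    · exact ⟨1, one_pos, by simp [h]⟩
    · obtain ⟨x, hx, hmin⟩ := hT.exists_isMinOn h hF.continuousOn
      refine ⟨F x, ?_, fun y hy => hmin hy⟩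
      by_contra hcon
      have h0 : F x ≤ 0 := not_lt.1 hcon
      obtain ⟨⟨hx1, hx2⟩, hx3⟩ := hx
      have hx1 : ‖x.1‖ = 1 := by simpa using hx1
      have hx2 : ‖x.2‖ = 1 := by simpa using hx2
      have hx3 : ∀ σ τ : ℝ, σ ^ 2 = 1 → τ ^ 2 = 1 →
        r ≤ max ‖σ • x.1 - ahat‖ ‖τ • x.2 - bhat‖ := hx3
      have := hzeros x.1 x.2 hx1 hx2 (fun k s t hst => by
        have := res_le_fA m I J Ahat (fun i => x.1 i) (fun j => x.2 j) k s t hst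
        exact abs_nonpos_iff.1 (this.trans h0))
      rcases this with h | h | h | h
      · have := hx3 1 1 (by norm_num) (by norm_num)
        simp [h.1, h.2] at this; linarith
      · have := hx3 1 (-1) (by norm_num) (by norm_num)
        simp [h.1, h.2] at this; linarith
      · have := hx3 (-1) 1 (by norm_num) (by norm_num)
        simp [h.1, h.2] at this; linarith
      · have := hx3 (-1) (-1) (by norm_num) (by norm_num)
        simp [h.1, h.2] at this; linarith
  obtain ⟨μ, hμ, hμF⟩ := hpos
  refine ⟨K + 2 / μ, by positivity, fun a b ha hb => ?_⟩
  have hS0 : 0 ≤ Real.sqrt (fA m I J Ahat (fun i => a i) (fun j => b j)) := Real.sqrt_nonneg _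
  by_cases hab : (a, b) ∈ T
  · have h1 : μ ≤ Real.sqrt (fA m I J Ahat (fun i => a i) (fun j => b j)) := hμF (a, b) hab
    set S := Real.sqrt (fA m I J Ahat (fun i => a i) (fun j => b j)) with hS
    have h2 : 2 ≤ (K + 2 / μ) * S := by
      calc 2 = 2 / μ * μ := by field_simp
        _ ≤ (K + 2 / μ) * S := by gcongr; linarith
    refine ⟨1, 1, by norm_num, by norm_num, fun i => ?_, fun j => ?_⟩
    · have k1 := coord_le a i
      have k2 := coord_le ahat i
      rw [one_mul]
      have := abs_sub (a i) (ahat i)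
      linarith
    · have k1 := coord_le b j
      have k2 := coord_le bhat j
      rw [one_mul]
      have := abs_sub (b j) (bhat j)
      linarith
  · have : ∃ σ τ : ℝ, σ ^ 2 = 1 ∧ τ ^ 2 = 1 ∧ max ‖σ • a - ahat‖ ‖τ • b - bhat‖ < r := by
      by_contra hcon
      push Not at hcon
      exact hab ⟨⟨by simpa using ha, by simpa using hb⟩, hcon⟩
    obtain ⟨σ, τ, hσ, hτ, hlt⟩ := this
    have hσ' : |σ| = 1 := by rw [← sq_abs] at hσ; nlinarith [abs_nonneg σ]
    have hτ' : |τ| = 1 := by rw [← sq_abs] at hτ; nlinarith [abs_nonneg τ]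
    obtain ⟨hl1, hl2⟩ := max_lt_iff.1 hlt
    have := hloc (σ • a) (τ • b) (by simp [norm_smul, hσ', ha]) (by simp [norm_smul, hτ', hb])
      (fun i => (coord_le (σ • a - ahat) i).trans hl1.le)
      (fun j => (coord_le (τ • b - bhat) j).trans hl2.le)
    have e : fA m I J Ahat (fun i => (σ • a) i) (fun j => (τ • b) j)
      = fA m I J Ahat (fun i => a i) (fun j => b j) := by
      rw [← fA_sign m I J Ahat (fun i => a i) (fun j => b j) σ τ hσ hτ]
      rfl
    rw [e] at this
    have hKK : K * Real.sqrt (fA m I J Ahat (fun i => a i) (fun j => b j)) ≤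
        (K + 2 / μ) * Real.sqrt (fA m I J Ahat (fun i => a i) (fun j => b j)) := by
      gcongr
      have : 0 < 2 / μ := by positivity
      linarith
    exact ⟨σ, τ, hσ, hτ, fun i => (this.1 i).trans hKK, fun j => (this.2 j).trans hKK⟩

set_option maxHeartbeats 1000000 in
theorem stmt1 {n1 n2 n3 : ℕ} (hn1 : 0 < n1) (hn2 : 0 < n2) (hn3 : 0 < n3)
    (m : Fin n3 → ℕ)
    (I : (k : Fin n3) → Fin (m k) → Fin n1) (J : (k : Fin n3) → Fin (m k) → Fin n2)
    (hinj : ∀ k : Fin n3, Function.Injective (fun s => (I k s, J k s)))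
    (ahat : EuclideanSpace ℝ (Fin n1)) (bhat : EuclideanSpace ℝ (Fin n2))
    (chat : Fin n3 → ℝ)
    (hna : ‖ahat‖ = 1) (hnb : ‖bhat‖ = 1)
    (Ahat : Fin n1 → Fin n2 → Fin n3 → ℝ)
    (hAhat : ∀ i j k, Ahat i j k = ahat i * bhat j * chat k)
    (Z : Matrix ((Σ k : Fin n3, {p : Fin (m k) × Fin (m k) // p.1 < p.2}) ⊕ Fin 2)
          (Fin n1 ⊕ Fin n2) ℝ)
    (hZ : Z = Matrix.of (Sum.elim
      (fun q : Σ k : Fin n3, {p : Fin (m k) × Fin (m k) // p.1 < p.2} =>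
        fun x : Fin n1 ⊕ Fin n2 => Real.sqrt 2 * chat q.1 *
          (Sum.elim
            (fun i => ahat (I q.1 q.2.1.1) * bhat (J q.1 q.2.1.1) * bhat (J q.1 q.2.1.2) *
                  (if i = I q.1 q.2.1.2 then 1 else 0)
              - ahat (I q.1 q.2.1.2) * bhat (J q.1 q.2.1.2) * bhat (J q.1 q.2.1.1) *
                  (if i = I q.1 q.2.1.1 then 1 else 0))
            (fun j => ahat (I q.1 q.2.1.1) * bhat (J q.1 q.2.1.1) * ahat (I q.1 q.2.1.2) *
                  (if j = J q.1 q.2.1.2 then 1 else 0)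
              - ahat (I q.1 q.2.1.2) * bhat (J q.1 q.2.1.2) * ahat (I q.1 q.2.1.1) *
                  (if j = J q.1 q.2.1.1 then 1 else 0)) x))
      ![Sum.elim (fun i => ahat i) (fun _ => 0),
        Sum.elim (fun _ => 0) (fun j => bhat j)]))
    (hrank : Z.rank = n1 + n2)
    (hzeros : ∀ (a : EuclideanSpace ℝ (Fin n1)) (b : EuclideanSpace ℝ (Fin n2)),
      ‖a‖ = 1 → ‖b‖ = 1 →
      (∀ (k : Fin n3) (s t : Fin (m k)), s < t →
        Ahat (I k s) (J k s) k * a (I k t) * b (J k t)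
          - Ahat (I k t) (J k t) k * a (I k s) * b (J k s) = 0) →
      ((a = ahat ∧ b = bhat) ∨ (a = ahat ∧ b = -bhat) ∨
       (a = -ahat ∧ b = bhat) ∨ (a = -ahat ∧ b = -bhat)))
    (hns : Nonsingular m I J (fun i => ahat i) (fun j => bhat j))
    (hchat : ∀ k : Fin n3, chat k ≠ 0) :
    ∃ C : ℝ, 0 < C ∧ ∃ ε : ℝ, 0 < ε ∧
      ∀ A : Fin n1 → Fin n2 → Fin n3 → ℝ,
        normOmega m I J (A - Ahat) ≤ ε →
        ∀ (astar : EuclideanSpace ℝ (Fin n1)) (bstar : EuclideanSpace ℝ (Fin n2)),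
          ‖astar‖ = 1 → ‖bstar‖ = 1 →
          (∀ (a : EuclideanSpace ℝ (Fin n1)) (b : EuclideanSpace ℝ (Fin n2)),
            ‖a‖ = 1 → ‖b‖ = 1 →
            fA m I J A (fun i => astar i) (fun j => bstar j)
              ≤ fA m I J A (fun i => a i) (fun j => b j)) →
          Nonsingular m I J (fun i => astar i) (fun j => bstar j) ∧
          ∀ cstar : Fin n3 → ℝ,
            (∀ k : Fin n3, cstar k =
              (∑ s : Fin (m k), A (I k s) (J k s) k * astar (I k s) * bstar (J k s)) /
              (∑ s : Fin (m k), (astar (I k s) * bstar (J k s)) ^ 2)) →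
            Real.sqrt (∑ i : Fin n1, ∑ j : Fin n2, ∑ k : Fin n3,
                (astar i * bstar j * cstar k - ahat i * bhat j * chat k) ^ 2)
              ≤ C * normOmega m I J (A - Ahat) := by
  obtain ⟨K, hK, hglob⟩ := global_bound m I J ahat bhat hna hnb Ahat hzeros
    (local_bound m I J ahat bhat chat hna hnb Ahat hAhat Z hZ hrank)
  have hac : ∀ i, |ahat i| ≤ 1 := fun i => hna ▸ coord_le ahat i
  have hbc : ∀ j, |bhat j| ≤ 1 := fun j => hnb ▸ coord_le bhat j
  -- uniform lower bound on the observed products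
  have hβ : ∃ β : ℝ, 0 < β ∧ ∀ k, ∃ s : Fin (m k), β ≤ |ahat (I k s) * bhat (J k s)| := by
    choose s hs using fun k => (hns k).2
    have : Nonempty (Fin n3) := ⟨⟨0, hn3⟩⟩
    obtain ⟨k0, hk0⟩ := Finite.exists_min (fun k => |ahat (I k (s k)) * bhat (J k (s k))|)
    exact ⟨_, abs_pos.2 (hs k0), fun k => ⟨s k, hk0 k⟩⟩
  obtain ⟨β, hβ, hβs⟩ := hβ
  set N : ℝ := ∑ k, (m k : ℝ) * m k with hN
  have hN0 : 0 ≤ N := Finset.sum_nonneg fun k _ => by positivity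
  set M : ℝ := ∑ k, (m k : ℝ) with hM
  have hM0 : 0 ≤ M := Finset.sum_nonneg fun k _ => by positivity
  set R : ℝ := ‖chat‖ with hR
  have hR0 : 0 ≤ R := norm_nonneg _
  have hcR : ∀ k, |chat k| ≤ R := fun k => by simpa using norm_le_pi_norm chat k
  -- the constant with `η = L * δ`
  set L : ℝ := K * (4 * Real.sqrt N) with hL
  have hL0 : 0 ≤ L := by positivity
  set C1 : ℝ := M * (1 + R * (2 * L)) * (4 / β ^ 2) with hC1
  have hC10 : 0 ≤ C1 := by positivity
  set C2 : ℝ := C1 + 2 * L * R with hC2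
  have hC20 : 0 ≤ C2 := by positivity
  refine ⟨Real.sqrt (n1 * (n2 * n3)) * C2 + 1, by positivity, β / (4 * (L + 1)), by positivity, ?_⟩
  intro A hA a b ha hb hmin
  set δ := normOmega m I J (A - Ahat) with hδ
  have hδ0 : 0 ≤ δ := Real.sqrt_nonneg _
  have ha1 : ∀ i, |a i| ≤ 1 := fun i => ha ▸ coord_le a i
  have hb1 : ∀ j, |b j| ≤ 1 := fun j => hb ▸ coord_le b j
  have hf : Real.sqrt (fA m I J Ahat (fun i => a i) (fun j => b j)) ≤ 4 * Real.sqrt N * δ := by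
    have h1 := fA_split m I J A Ahat (fun i => a i) (fun j => b j)
    have h2 := hmin ahat bhat hna hnb
    rw [fA_hat m I J A Ahat (fun i => ahat i) (fun j => bhat j) chat hAhat] at h2
    have h3 := fA_bound m I J (A - Ahat) (fun i => ahat i) (fun j => bhat j) hac hbc
    have h4 := fA_bound m I J (A - Ahat) (fun i => a i) (fun j => b j) ha1 hb1
    apply Real.sqrt_le_iff.2 ⟨by positivity, ?_⟩
    rw [mul_pow, mul_pow, Real.sq_sqrt hN0]
    linarith
  obtain ⟨σ, τ, hσ, hτ, hσa, hτb⟩ := hglob a b ha hb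
  have hσ' : |σ| = 1 := by rw [← sq_abs] at hσ; nlinarith [abs_nonneg σ]
  have hτ' : |τ| = 1 := by rw [← sq_abs] at hτ; nlinarith [abs_nonneg τ]
  have hLη : K * Real.sqrt (fA m I J Ahat (fun i => a i) (fun j => b j)) ≤ L * δ := by
    calc _ ≤ K * (4 * Real.sqrt N * δ) := by gcongr
      _ = _ := by rw [hL]; ring
  replace hσa := fun i => (hσa i).trans hLη
  replace hτb := fun j => (hτb j).trans hLη
  have hp : ∀ i j, |σ * τ * (a i * b j) - ahat i * bhat j| ≤ 2 * L * δ := by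
    intro i j
    have e : σ * τ * (a i * b j) - ahat i * bhat j
      = (σ * a i) * (τ * b j - bhat j) + (σ * a i - ahat i) * bhat j := by ring
    have h1 : |(σ * a i) * (τ * b j - bhat j)| ≤ 1 * (L * δ) := by
      rw [abs_mul, abs_mul, hσ', one_mul]
      exact mul_le_mul (ha1 i) (hτb j) (abs_nonneg _) (by norm_num)
    have h2 : |(σ * a i - ahat i) * bhat j| ≤ (L * δ) * 1 := by
      rw [abs_mul]
      exact mul_le_mul (hσa i) (hbc j) (abs_nonneg _) (by positivity)
    rw [e]
    have := abs_add_le ((σ * a i) * (τ * b j - bhat j)) ((σ * a i - ahat i) * bhat j)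
    linarith
  have hp1 : ∀ i j, |a i * b j| ≤ 1 := fun i j => by
    rw [abs_mul]; exact mul_le_one₀ (ha1 i) (abs_nonneg _) (hb1 j)
  have hστ : |σ * τ| = 1 := by rw [abs_mul, hσ', hτ', one_mul]
  have hστ2 : (σ * τ) * (σ * τ) = 1 := by
    calc _ = σ ^ 2 * τ ^ 2 := by ring
      _ = 1 := by rw [hσ, hτ]; ring
  have hsmall : 2 * L * δ ≤ β / 2 := by
    have h1 : (L + 1) * δ ≤ (L + 1) * (β / (4 * (L + 1))) := by gcongr
    have h2 : (L + 1) * (β / (4 * (L + 1))) = β / 4 := by field_simp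
    linarith
  have hlow : ∀ k, ∃ s : Fin (m k), β / 2 ≤ |a (I k s) * b (J k s)| := by
    intro k
    obtain ⟨s, hs⟩ := hβs k
    refine ⟨s, ?_⟩
    have h1 := hp (I k s) (J k s)
    have h2 : |σ * τ * (a (I k s) * b (J k s))| = |a (I k s) * b (J k s)| := by
      rw [abs_mul, hστ, one_mul]
    have h3 := abs_sub_abs_le_abs_sub (ahat (I k s) * bhat (J k s)) (σ * τ * (a (I k s) * b (J k s)))
    rw [abs_sub_comm, h2] at h3
    rw [abs_sub_comm] at h3
    rw [abs_sub_comm] at h1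
    linarith
  refine ⟨fun k => ⟨(hns k).1, ?_⟩, ?_⟩
  · obtain ⟨s, hs⟩ := hlow k
    refine ⟨s, abs_pos.1 (lt_of_lt_of_le (by positivity) hs)⟩
  intro c hc
  have hcc : ∀ k, |σ * τ * c k - chat k| ≤ C1 * δ := by
    intro k
    set P : ℝ := ∑ s : Fin (m k), (a (I k s) * b (J k s)) ^ 2 with hP
    have hPlow : β ^ 2 / 4 ≤ P := by
      obtain ⟨s, hs⟩ := hlow k
      calc β ^ 2 / 4 = (β / 2) ^ 2 := by ring
        _ ≤ |a (I k s) * b (J k s)| ^ 2 := by gcongr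
        _ = (a (I k s) * b (J k s)) ^ 2 := sq_abs _
        _ ≤ P := Finset.single_le_sum (f := fun s : Fin (m k) => (a (I k s) * b (J k s)) ^ 2)
            (fun s _ => sq_nonneg _) (Finset.mem_univ s)
    have hP0 : 0 < P := lt_of_lt_of_le (by positivity) hPlow
    have e : (σ * τ * c k - chat k) * P = ∑ s : Fin (m k),
        ((A - Ahat) (I k s) (J k s) k
          - chat k * (σ * τ * (a (I k s) * b (J k s)) - ahat (I k s) * bhat (J k s)))
          * (σ * τ * (a (I k s) * b (J k s))) := by
      have h1 : c k * P = ∑ s : Fin (m k), A (I k s) (J k s) k * a (I k s) * b (J k s) := by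
        rw [hc k, div_mul_cancel₀ _ hP0.ne']
      calc _ = σ * τ * (c k * P) - chat k * P := by ring
        _ = _ := by
          rw [h1, hP, Finset.mul_sum, Finset.mul_sum, ← Finset.sum_sub_distrib]
          refine Finset.sum_congr rfl fun s _ => ?_
          simp only [Pi.sub_apply, hAhat]
          linear_combination (chat k * (a (I k s) * b (J k s)) ^ 2) * hστ2
    have hnum : |(σ * τ * c k - chat k) * P| ≤ M * ((1 + R * (2 * L)) * δ) := by
      rw [e]
      refine (Finset.abs_sum_le_sum_abs _ _).trans ?_
      calc _ ≤ ∑ s : Fin (m k), (1 + R * (2 * L)) * δ := ?_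
        _ = m k * ((1 + R * (2 * L)) * δ) := by simp
        _ ≤ M * ((1 + R * (2 * L)) * δ) := by
          have : (m k : ℝ) ≤ M := Finset.single_le_sum (f := fun k => (m k : ℝ))
            (fun k _ => by positivity) (Finset.mem_univ k)
          gcongr
      refine Finset.sum_le_sum fun s _ => ?_
      rw [abs_mul, abs_mul (σ * τ), hστ, one_mul]
      have h1 := entry_le m I J (A - Ahat) k s
      have h2 : |chat k * (σ * τ * (a (I k s) * b (J k s)) - ahat (I k s) * bhat (J k s))|
          ≤ R * (2 * L * δ) := by
        rw [abs_mul]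
        exact mul_le_mul (hcR k) (hp _ _) (abs_nonneg _) hR0
      have h3 := (abs_sub _ _).trans (add_le_add h1 h2)
      calc _ ≤ (normOmega m I J (A - Ahat) + R * (2 * L * δ)) * 1 :=
            mul_le_mul h3 (hp1 _ _) (abs_nonneg _) (by positivity)
        _ = _ := by rw [← hδ]; ring
    rw [abs_mul, abs_of_pos hP0] at hnum
    have h4 : |σ * τ * c k - chat k| * (β ^ 2 / 4) ≤ M * ((1 + R * (2 * L)) * δ) :=
      le_trans (by gcongr) hnum
    calc |σ * τ * c k - chat k| = |σ * τ * c k - chat k| * (β ^ 2 / 4) * (4 / β ^ 2) := by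
          field_simp
      _ ≤ M * ((1 + R * (2 * L)) * δ) * (4 / β ^ 2) := by gcongr
      _ = _ := by rw [hC1]; ring
  have hent : ∀ i j k, (a i * b j * c k - ahat i * bhat j * chat k) ^ 2 ≤ (C2 * δ) ^ 2 := by
    intro i j k
    have e : a i * b j * c k - ahat i * bhat j * chat k
      = (σ * τ * (a i * b j)) * (σ * τ * c k - chat k)
        + (σ * τ * (a i * b j) - ahat i * bhat j) * chat k := by
      linear_combination (-(a i * b j * c k)) * hστ2
    have h1 : |(σ * τ * (a i * b j)) * (σ * τ * c k - chat k)| ≤ 1 * (C1 * δ) := by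
      rw [abs_mul, abs_mul (σ * τ), hστ, one_mul]
      exact mul_le_mul (hp1 i j) (hcc k) (abs_nonneg _) (by norm_num)
    have h2 : |(σ * τ * (a i * b j) - ahat i * bhat j) * chat k| ≤ (2 * L * δ) * R := by
      rw [abs_mul]
      exact mul_le_mul (hp i j) (hcR k) (abs_nonneg _) (by positivity)
    have h3 := (abs_add_le _ _).trans (add_le_add h1 h2)
    rw [← e] at h3
    rw [← sq_abs]
    have h4 : 1 * (C1 * δ) + (2 * L * δ) * R = C2 * δ := by rw [hC2]; ring
    rw [h4] at h3
    gcongr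
  have hsum : ∑ i : Fin n1, ∑ j : Fin n2, ∑ k : Fin n3,
      (a i * b j * c k - ahat i * bhat j * chat k) ^ 2 ≤ (n1 * (n2 * n3)) * (C2 * δ) ^ 2 := by
    calc _ ≤ ∑ i : Fin n1, ∑ j : Fin n2, ∑ k : Fin n3, (C2 * δ) ^ 2 :=
          Finset.sum_le_sum fun i _ => Finset.sum_le_sum fun j _ =>
            Finset.sum_le_sum fun k _ => hent i j k
      _ = _ := by simp; ring
  calc _ ≤ Real.sqrt ((n1 * (n2 * n3)) * (C2 * δ) ^ 2) := Real.sqrt_le_sqrt hsum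
    _ = Real.sqrt (n1 * (n2 * n3)) * (C2 * δ) := by
      rw [Real.sqrt_mul (by positivity : (0 : ℝ) ≤ n1 * (n2 * n3)), Real.sqrt_sq (mul_nonneg hC20 hδ0)]
    _ ≤ _ := by nlinarith
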